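/- Let c > 0, let f : [0,∞) → ℝ be continuous, and let F(s) = ∫₀^s f(u) du. Then for every x ∈ ℝ³ with x ≠ 0 and every t ∈ ℝ, (t/(4π)) ∫_{S²} f(|x − c|t|γ|²) dσ_{S²}(γ) = (sgn(t)/(4c|x|)) · ( F((|x| + c|t|)²) − F((|x| − c|t|)²) ), where σ_{S²} is the surface measure on the unit sphere S² ⊂ ℝ³ (total mass 4π) and sgn is the sign function with sgn(0) = 0. -/

import Mathlib

open MeasureTheory Real

/-- The surface measure on the unit sphere `S² ⊂ ℝ³` (total mass `4π`). -/
noncomputable def sphMeas : Measure (Metric.sphere (0 : EuclideanSpace ℝ (Fin 3)) 1) :=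
  (volume : Measure (EuclideanSpace ℝ (Fin 3))).toSphere

/-!
Write `y ∈ E` as `y = z • e + w` with `‖e‖ = 1` and `w ⊥ e`, and set `s = ‖w‖`. Polar coordinates
in `E` factor the integral of `g (⟪e, y⟫ / ‖y‖) * ψ ‖y‖` into the spherical integral of
`γ ↦ g ⟪e, γ⟫` and a radial integral of `ψ`. Polar coordinates in `eᗮ`, followed by the
substitution `z = s * τ`, factor it instead into an integral over the slope `τ` and the same
radial integral. Since `τ ↦ τ / √(1 + τ ^ 2)` maps `ℝ` onto `(-1, 1)` with derivative
`(1 + τ ^ 2) ^ (-3 / 2)`, the cosine `⟪e, γ⟫` has density proportional to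
`(1 - z ^ 2) ^ ((dim E - 3) / 2)`, which is constant in dimension three (Archimedes). There, as
`‖x - ρ • γ‖ ^ 2` is affine in `⟪x, γ⟫`, the spherical mean is an integral of `f` over an interval.
-/

open Module Metric Set
open scoped ENNReal RealInnerProductSpace

section PolarCoordinates

variable {E : Type*} [NormedAddCommGroup E] [NormedSpace ℝ E] [FiniteDimensional ℝ E]
  [MeasurableSpace E] [BorelSpace E]

theorem lintegral_volumeIoiPow (n : ℕ) {ψ : ℝ → ℝ≥0∞} (hψ : Measurable ψ) :
    ∫⁻ r, ψ r ∂Measure.volumeIoiPow n = ∫⁻ r in Ioi 0, ENNReal.ofReal (r ^ n) * ψ r := by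
  rw [Measure.volumeIoiPow, lintegral_withDensity_eq_lintegral_mul _ (by fun_prop) (by fun_prop)]
  exact lintegral_subtype_comap measurableSet_Ioi fun r : ℝ ↦ ENNReal.ofReal (r ^ n) * ψ r

theorem lintegral_comp_direction_mul_comp_norm [Nontrivial E] (μ : Measure E) [μ.IsAddHaarMeasure]
    {u : E → ℝ≥0∞} (hu : Measurable u) {ψ : ℝ → ℝ≥0∞} (hψ : Measurable ψ) :
    ∫⁻ y, u (‖y‖⁻¹ • y) * ψ ‖y‖ ∂μ =
      (∫⁻ γ : sphere (0 : E) 1, u γ ∂μ.toSphere) *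
        ∫⁻ r in Ioi 0, ENNReal.ofReal (r ^ (finrank ℝ E - 1)) * ψ r := by
  calc ∫⁻ y, u (‖y‖⁻¹ • y) * ψ ‖y‖ ∂μ
      = ∫⁻ y : ({0}ᶜ : Set E), u (‖y.1‖⁻¹ • y.1) * ψ ‖y.1‖ ∂μ.comap (↑) := by
        rw [lintegral_subtype_comap (measurableSet_singleton _).compl
          fun y : E ↦ u (‖y‖⁻¹ • y) * ψ ‖y‖, restrict_compl_singleton]
    _ = ∫⁻ p, u p.1 * ψ p.2 ∂μ.toSphere.prod (.volumeIoiPow (finrank ℝ E - 1)) := by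
        rw [← μ.measurePreserving_homeomorphUnitSphereProd.lintegral_comp (by fun_prop)]
        simp
    _ = _ := by
        rw [lintegral_prod_mul (f := fun γ : sphere (0 : E) 1 ↦ u γ)
          (g := fun r : Ioi (0 : ℝ) ↦ ψ r) (by fun_prop) (by fun_prop), lintegral_volumeIoiPow _ hψ]

theorem lintegral_comp_norm [Nontrivial E] (μ : Measure E) [μ.IsAddHaarMeasure]
    {ψ : ℝ → ℝ≥0∞} (hψ : Measurable ψ) :
    ∫⁻ y, ψ ‖y‖ ∂μ =
      μ.toSphere univ * ∫⁻ r in Ioi 0, ENNReal.ofReal (r ^ (finrank ℝ E - 1)) * ψ r := by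
  simpa using lintegral_comp_direction_mul_comp_norm μ (u := 1) measurable_const hψ

theorem lintegral_Ioi_pow_mul_indicator_Iio_one (n : ℕ) :
    ∫⁻ r in Ioi (0 : ℝ), ENNReal.ofReal (r ^ n) * (Iio 1).indicator 1 r =
      ENNReal.ofReal (1 / (n + 1)) := by
  rw [← lintegral_volumeIoiPow n (measurable_one.indicator measurableSet_Iio)]
  calc ∫⁻ r : Ioi (0 : ℝ), (Iio 1).indicator 1 (r : ℝ) ∂Measure.volumeIoiPow n
      = Measure.volumeIoiPow n (Iio ⟨1, mem_Ioi.2 one_pos⟩) :=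
        lintegral_indicator_one (s := Iio (⟨1, mem_Ioi.2 one_pos⟩ : Ioi (0 : ℝ))) measurableSet_Iio
    _ = ENNReal.ofReal (1 / (n + 1)) := by rw [Measure.volumeIoiPow_apply_Iio]; simp

end PolarCoordinates

section Substitution

theorem lintegral_Ioi_pow_mul_comp_mul (n : ℕ) (ψ : ℝ → ℝ≥0∞) {a : ℝ} (ha : 0 < a) :
    ∫⁻ s in Ioi 0, ENNReal.ofReal (s ^ n) * ψ (a * s) =
      ENNReal.ofReal (a⁻¹ ^ (n + 1)) * ∫⁻ r in Ioi 0, ENNReal.ofReal (r ^ n) * ψ r := by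
  have himage : (a⁻¹ * ·) '' Ioi 0 = Ioi 0 := by simpa using image_mul_left_Ioi (inv_pos.2 ha) 0
  rw [← lintegral_const_mul' _ _ ENNReal.ofReal_ne_top]
  conv_lhs => rw [← himage]
  rw [lintegral_image_eq_lintegral_abs_deriv_mul measurableSet_Ioi
    (fun r _ ↦ (hasDerivAt_const_mul a⁻¹).hasDerivWithinAt)
    (mul_right_injective₀ (inv_ne_zero ha.ne')).injOn]
  refine setLIntegral_congr_fun measurableSet_Ioi fun r (_ : 0 < r) ↦ ?_
  rw [mul_inv_cancel_left₀ ha.ne', abs_of_pos (inv_pos.2 ha), ← mul_assoc, ← mul_assoc,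
    ← ENNReal.ofReal_mul (by positivity), ← ENNReal.ofReal_mul (by positivity)]
  ring_nf

theorem lintegral_eq_ofReal_mul_lintegral_comp_mul (f : ℝ → ℝ≥0∞) {a : ℝ} (ha : 0 < a) :
    ∫⁻ z, f z = ENNReal.ofReal a * ∫⁻ τ, f (a * τ) := by
  conv_lhs => rw [← Real.smul_map_volume_mul_left ha.ne']
  rw [lintegral_smul_measure, abs_of_pos ha, smul_eq_mul,
    (measurableEmbedding_mulLeft₀ ha.ne').lintegral_map]

theorem hasDerivAt_div_sqrt_one_add_sq (τ : ℝ) :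
    HasDerivAt (fun τ ↦ τ / √(1 + τ ^ 2)) ((√(1 + τ ^ 2))⁻¹ ^ 3) τ := by
  have hpos : 0 < 1 + τ ^ 2 := by positivity
  have hsqrt : HasDerivAt (fun τ ↦ √(1 + τ ^ 2)) (τ / √(1 + τ ^ 2)) τ := by
    convert! ((hasDerivAt_pow 2 τ).const_add 1).sqrt hpos.ne' using 1
    field_simp
    simp [mul_comm]
  convert! (hasDerivAt_id τ).div hsqrt (by positivity) using 1
  have := sq_sqrt hpos.le
  simp only [id]
  field_simp
  linear_combination - this

theorem lintegral_Ioo_eq_lintegral_comp_div_sqrt (g : ℝ → ℝ≥0∞) :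
    ∫⁻ z in Ioo (-1) 1, g z =
      ∫⁻ τ, ENNReal.ofReal ((√(1 + τ ^ 2))⁻¹ ^ 3) * g (τ / √(1 + τ ^ 2)) := by
  let e := OpenPartialHomeomorph.univUnitBall (E := ℝ)
  have he : e = fun τ ↦ τ / √(1 + τ ^ 2) := by
    ext τ
    simp [e, OpenPartialHomeomorph.univUnitBall_apply, div_eq_inv_mul]
  have himage : (fun τ : ℝ ↦ τ / √(1 + τ ^ 2)) '' univ = Ioo (-1) 1 := by
    rw [← he]
    exact e.image_source_eq_target.trans
      (by simp [e, OpenPartialHomeomorph.univUnitBall, Real.ball_eq_Ioo])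
  have hinj : InjOn (fun τ : ℝ ↦ τ / √(1 + τ ^ 2)) univ := he ▸ e.injOn
  rw [← himage, lintegral_image_eq_lintegral_abs_deriv_mul .univ
    (fun τ _ ↦ (hasDerivAt_div_sqrt_one_add_sq τ).hasDerivWithinAt) hinj, setLIntegral_univ]
  congr! 4 with τ
  exact abs_of_nonneg (by positivity)

theorem sqrt_one_sub_div_sqrt_sq (τ : ℝ) :
    √(1 - (τ / √(1 + τ ^ 2)) ^ 2) = (√(1 + τ ^ 2))⁻¹ := by
  have : 0 < 1 + τ ^ 2 := by positivity
  rw [← sqrt_inv, div_pow, sq_sqrt this.le]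
  congr 1
  field_simp
  ring

theorem lintegral_Ioo_sqrt_one_sub_sq_zpow_mul (n : ℕ) (g : ℝ → ℝ≥0∞) :
    ∫⁻ z in Ioo (-1) 1, ENNReal.ofReal (√(1 - z ^ 2) ^ (n - 1 : ℤ)) * g z =
      ∫⁻ τ, ENNReal.ofReal ((√(1 + τ ^ 2))⁻¹ ^ (n + 2)) * g (τ / √(1 + τ ^ 2)) := by
  rw [lintegral_Ioo_eq_lintegral_comp_div_sqrt]
  congr! 2 with τ
  have hsqrt : (√(1 + τ ^ 2))⁻¹ ≠ 0 := by positivity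
  rw [sqrt_one_sub_div_sqrt_sq, ← mul_assoc, ← ENNReal.ofReal_mul (by positivity),
    ← zpow_natCast _ 3, ← zpow_natCast _ (n + 2), ← zpow_add₀ hsqrt]
  congr! 3
  push_cast
  ring

end Substitution

theorem div_abs_eq_sign (t : ℝ) : t / |t| = Real.sign t := by
  rcases lt_trichotomy t 0 with h | rfl | h
  · rw [Real.sign_of_neg h, abs_of_neg h, div_neg, div_self h.ne]
  · simp
  · rw [Real.sign_of_pos h, abs_of_pos h, div_self h.ne']

section InnerProductSpace

theorem finrank_orthogonal_span_of_norm_eq_one {E : Type*} [NormedAddCommGroup E]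
    [InnerProductSpace ℝ E] {n : ℕ} (hn : finrank ℝ E = n + 1) {e : E} (he : ‖e‖ = 1) :
    finrank ℝ (ℝ ∙ e)ᗮ = n :=
  have : Fact (finrank ℝ E = n + 1) := ⟨hn⟩
  Submodule.finrank_orthogonal_span_singleton (ne_zero_of_norm_ne_zero (he ▸ one_ne_zero))

variable {E : Type*} [NormedAddCommGroup E] [InnerProductSpace ℝ E] [FiniteDimensional ℝ E]
  [MeasurableSpace E] [BorelSpace E]

theorem measurePreserving_smul_add_orthogonal {e : E} (he : ‖e‖ = 1) :
    MeasurePreserving fun p : ℝ × (ℝ ∙ e)ᗮ ↦ p.1 • e + (p.2 : E) := by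
  have hline := (LinearIsometryEquiv.toSpanUnitSingleton (𝕜 := ℝ) e he).measurePreserving
  have hsplit := (ℝ ∙ e).orthogonalDecomposition.symm.measurePreserving.comp
    (WithLp.volume_preserving_toLp (ℝ ∙ e) (ℝ ∙ e)ᗮ)
  convert! hsplit.comp (hline.prod (.id (volume : Measure (ℝ ∙ e)ᗮ))) using 2

theorem lintegral_comp_inner_norm {n : ℕ} (hn : finrank ℝ E = n + 2) {e : E} (he : ‖e‖ = 1)
    {h : ℝ × ℝ → ℝ≥0∞} (hh : Measurable h) :
    ∫⁻ y, h (⟪e, y⟫, ‖y‖) =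
      (volume : Measure (ℝ ∙ e)ᗮ).toSphere univ *
        ∫⁻ s in Ioi 0, ENNReal.ofReal (s ^ n) * ∫⁻ z, h (z, √(z ^ 2 + s ^ 2)) := by
  have hfinrank : finrank ℝ (ℝ ∙ e)ᗮ = n + 1 := finrank_orthogonal_span_of_norm_eq_one hn he
  have : Nontrivial (ℝ ∙ e)ᗮ := nontrivial_of_finrank_pos (R := ℝ) (by omega)
  have hinner (z : ℝ) (w : (ℝ ∙ e)ᗮ) : ⟪e, z • e + (w : E)⟫ = z := by
    simp [inner_add_right, inner_smul_right, he,
      Submodule.mem_orthogonal_singleton_iff_inner_right.1 w.2]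
  have hnorm (z : ℝ) (w : (ℝ ∙ e)ᗮ) : ‖z • e + (w : E)‖ = √(z ^ 2 + ‖w‖ ^ 2) := by
    rw [eq_comm, sqrt_eq_iff_mul_self_eq (by positivity) (by positivity),
      norm_add_sq_eq_norm_sq_add_norm_sq_of_inner_eq_zero (𝕜 := ℝ)]
    · simp [norm_smul, he, sq]
    · simp [inner_smul_left, Submodule.mem_orthogonal_singleton_iff_inner_right.1 w.2]
  calc ∫⁻ y, h (⟪e, y⟫, ‖y‖)
      = ∫⁻ w : (ℝ ∙ e)ᗮ, ∫⁻ z, h (z, √(z ^ 2 + ‖w‖ ^ 2)) := by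
        rw [← (measurePreserving_smul_add_orthogonal he).lintegral_comp (by fun_prop)]
        simp only [hinner, hnorm]
        exact lintegral_prod_symm' _ (by fun_prop)
    _ = _ := by
        rw [lintegral_comp_norm volume (ψ := fun s ↦ ∫⁻ z, h (z, √(z ^ 2 + s ^ 2)))
          (Measurable.lintegral_prod_left (by fun_prop)), hfinrank, Nat.add_sub_cancel]

theorem lintegral_comp_inner_div_norm_mul_comp_norm {n : ℕ} (hn : finrank ℝ E = n + 2) {e : E}
    (he : ‖e‖ = 1) {g ψ : ℝ → ℝ≥0∞} (hg : Measurable g) (hψ : Measurable ψ) :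
    ∫⁻ y, g (⟪e, y⟫ / ‖y‖) * ψ ‖y‖ =
      (volume : Measure (ℝ ∙ e)ᗮ).toSphere univ *
        (∫⁻ z in Ioo (-1) 1, ENNReal.ofReal (√(1 - z ^ 2) ^ (n - 1 : ℤ)) * g z) *
        ∫⁻ r in Ioi 0, ENNReal.ofReal (r ^ (n + 1)) * ψ r := by
  have hscale {s : ℝ} (hs : 0 < s) (τ : ℝ) : √((s * τ) ^ 2 + s ^ 2) = √(1 + τ ^ 2) * s := by
    rw [show (s * τ) ^ 2 + s ^ 2 = (1 + τ ^ 2) * s ^ 2 by ring, sqrt_mul' _ (sq_nonneg s),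
      sqrt_sq hs.le]
  have hslope {s : ℝ} (hs : 0 < s) :
      ENNReal.ofReal (s ^ n) * ∫⁻ z, g (z / √(z ^ 2 + s ^ 2)) * ψ √(z ^ 2 + s ^ 2) =
        ∫⁻ τ, g (τ / √(1 + τ ^ 2)) * (ENNReal.ofReal (s ^ (n + 1)) * ψ (√(1 + τ ^ 2) * s)) := by
    rw [lintegral_eq_ofReal_mul_lintegral_comp_mul _ hs, ← mul_assoc,
      ← ENNReal.ofReal_mul (by positivity), ← pow_succ,
      ← lintegral_const_mul' _ _ ENNReal.ofReal_ne_top]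
    refine lintegral_congr fun τ ↦ ?_
    rw [hscale hs, mul_comm _ s, mul_div_mul_left _ _ hs.ne']
    ring
  rw [lintegral_comp_inner_norm hn he (h := fun p ↦ g (p.1 / p.2) * ψ p.2) (by fun_prop),
    mul_assoc]
  congr 1
  calc ∫⁻ s in Ioi 0, ENNReal.ofReal (s ^ n) *
        ∫⁻ z, g (z / √(z ^ 2 + s ^ 2)) * ψ √(z ^ 2 + s ^ 2)
      = ∫⁻ s in Ioi 0, ∫⁻ τ,
          g (τ / √(1 + τ ^ 2)) * (ENNReal.ofReal (s ^ (n + 1)) * ψ (√(1 + τ ^ 2) * s)) :=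
        setLIntegral_congr_fun measurableSet_Ioi fun s hs ↦ hslope hs
    _ = ∫⁻ τ, g (τ / √(1 + τ ^ 2)) *
          ∫⁻ s in Ioi 0, ENNReal.ofReal (s ^ (n + 1)) * ψ (√(1 + τ ^ 2) * s) := by
        rw [lintegral_lintegral_swap (by fun_prop)]
        exact lintegral_congr fun τ ↦ lintegral_const_mul _ (by fun_prop)
    _ = ∫⁻ τ, ENNReal.ofReal ((√(1 + τ ^ 2))⁻¹ ^ (n + 2)) * g (τ / √(1 + τ ^ 2)) *
          ∫⁻ r in Ioi 0, ENNReal.ofReal (r ^ (n + 1)) * ψ r := by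
        refine lintegral_congr fun τ ↦ ?_
        rw [lintegral_Ioi_pow_mul_comp_mul _ _ (by positivity), ← mul_assoc, mul_comm (g _)]
    _ = _ := by rw [lintegral_mul_const _ (by fun_prop), lintegral_Ioo_sqrt_one_sub_sq_zpow_mul]

theorem lintegral_toSphere_comp_inner {n : ℕ} (hn : finrank ℝ E = n + 2) {e : E}
    (he : ‖e‖ = 1) {g : ℝ → ℝ≥0∞} (hg : Measurable g) :
    ∫⁻ γ : sphere (0 : E) 1, g ⟪e, γ⟫ ∂(volume : Measure E).toSphere =
      (volume : Measure (ℝ ∙ e)ᗮ).toSphere univ *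
        ∫⁻ z in Ioo (-1) 1, ENNReal.ofReal (√(1 - z ^ 2) ^ (n - 1 : ℤ)) * g z := by
  have : Nontrivial E := nontrivial_of_finrank_pos (R := ℝ) (by omega)
  -- Any radial weight of finite nonzero mass would do: the mass cancels.
  let ψ : ℝ → ℝ≥0∞ := (Iio 1).indicator 1
  have hψ : Measurable ψ := measurable_one.indicator measurableSet_Iio
  have hmass := lintegral_Ioi_pow_mul_indicator_Iio_one (n + 1)
  have hmass_ne_zero : ENNReal.ofReal (1 / ((n + 1 : ℕ) + 1)) ≠ 0 := by
    rw [ENNReal.ofReal_ne_zero_iff]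
    positivity
  have hpolar := lintegral_comp_direction_mul_comp_norm (volume : Measure E)
    (u := fun y ↦ g ⟪e, y⟫) (by fun_prop) hψ
  simp only [inner_smul_right, ← div_eq_inv_mul] at hpolar
  rw [lintegral_comp_inner_div_norm_mul_comp_norm hn he hg hψ, hn,
    show n + 2 - 1 = n + 1 from rfl, hmass] at hpolar
  exact ((ENNReal.mul_left_inj hmass_ne_zero ENNReal.ofReal_ne_top).1 hpolar).symm

theorem toSphere_univ_of_finrank_eq_two (hE : finrank ℝ E = 2) :
    (volume : Measure E).toSphere univ = ENNReal.ofReal (2 * π) := by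
  have : Nontrivial E := nontrivial_of_finrank_pos (R := ℝ) (by omega)
  rw [Measure.toSphere_apply_univ, InnerProductSpace.volume_ball_of_dim_even (k := 1) hE, hE,
    ENNReal.ofReal_mul zero_le_two]
  simp

theorem map_inner_toSphere_of_finrank_eq_three (hE : finrank ℝ E = 3) {e : E} (he : ‖e‖ = 1) :
    (volume : Measure E).toSphere.map (fun γ : sphere (0 : E) 1 ↦ ⟪e, (γ : E)⟫) =
      ENNReal.ofReal (2 * π) • volume.restrict (Ioo (-1) 1) := by
  refine Measure.ext_of_lintegral _ fun g hg ↦ ?_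
  rw [lintegral_map hg (by fun_prop), lintegral_toSphere_comp_inner (n := 1) hE he hg,
    toSphere_univ_of_finrank_eq_two (finrank_orthogonal_span_of_norm_eq_one hE he),
    lintegral_smul_measure]
  simp

variable {G : Type*} [NormedAddCommGroup G] [NormedSpace ℝ G]

theorem integral_toSphere_comp_inner_of_finrank_eq_three (hE : finrank ℝ E = 3) {e : E}
    (he : ‖e‖ = 1) {g : ℝ → G} (hg : AEStronglyMeasurable g (volume.restrict (Ioo (-1) 1))) :
    ∫ γ : sphere (0 : E) 1, g ⟪e, γ⟫ ∂(volume : Measure E).toSphere =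
      (2 * π) • ∫ z in (-1)..1, g z := by
  have hmap := map_inner_toSphere_of_finrank_eq_three hE he
  rw [← integral_map (f := g) (φ := fun γ : sphere (0 : E) 1 ↦ ⟪e, (γ : E)⟫)
    (by fun_prop) (hmap ▸ hg.smul_measure _), hmap, integral_smul_measure,
    ENNReal.toReal_ofReal (by positivity), intervalIntegral.integral_of_le (by norm_num),
    integral_Ioc_eq_integral_Ioo]

theorem integral_toSphere_comp_norm_sub_smul_sq (hE : finrank ℝ E = 3) {x : E} (hx : x ≠ 0)
    {ρ : ℝ} (hρ : ρ ≠ 0) {f : ℝ → G}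
    (hf : IntervalIntegrable f volume ((‖x‖ - ρ) ^ 2) ((‖x‖ + ρ) ^ 2)) :
    ∫ γ : sphere (0 : E) 1, f (‖x - ρ • (γ : E)‖ ^ 2) ∂(volume : Measure E).toSphere =
      (π / (‖x‖ * ρ)) • ∫ u in (‖x‖ - ρ) ^ 2..(‖x‖ + ρ) ^ 2, f u := by
  have hx' : ‖x‖ ≠ 0 := norm_ne_zero_iff.2 hx
  set e : E := ‖x‖⁻¹ • x
  have he : ‖e‖ = 1 := by simp [e, norm_smul, hx']
  have hinner (γ : E) : ⟪x, γ⟫ = ‖x‖ * ⟪e, γ⟫ := by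
    rw [real_inner_smul_left, mul_inv_cancel_left₀ hx']
  have hcoeff : 2 * ‖x‖ * ρ ≠ 0 := by positivity
  have hlow : ‖x‖ ^ 2 + ρ ^ 2 - 2 * ‖x‖ * ρ * 1 = (‖x‖ - ρ) ^ 2 := by ring
  have hhigh : ‖x‖ ^ 2 + ρ ^ 2 - 2 * ‖x‖ * ρ * -1 = (‖x‖ + ρ) ^ 2 := by ring
  have hcos (γ : sphere (0 : E) 1) :
      ‖x - ρ • (γ : E)‖ ^ 2 = ‖x‖ ^ 2 + ρ ^ 2 - 2 * ‖x‖ * ρ * ⟪e, γ⟫ := by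
    rw [norm_sub_sq_real, norm_smul, inner_smul_right, norm_eq_of_mem_sphere, mul_one,
      norm_eq_abs, sq_abs, hinner]
    ring
  have hg : IntervalIntegrable (fun z ↦ f (‖x‖ ^ 2 + ρ ^ 2 - 2 * ‖x‖ * ρ * z)) volume (-1) 1 := by
    have := (hf.comp_sub_left (‖x‖ ^ 2 + ρ ^ 2)).comp_mul_left (c := 2 * ‖x‖ * ρ)
    simpa only [← hlow, ← hhigh, sub_sub_cancel, mul_div_cancel_left₀ _ hcoeff] using this.symm
  have hmeas := ((intervalIntegrable_iff_integrableOn_Ioo_of_le (by norm_num)).1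
    hg).aestronglyMeasurable
  simp only [hcos]
  rw [integral_toSphere_comp_inner_of_finrank_eq_three hE he hmeas,
    intervalIntegral.integral_comp_sub_mul f hcoeff, hlow, hhigh, smul_smul]
  congr 1
  field_simp

theorem stmt_10_general (hE : finrank ℝ E = 3) {c : ℝ} (hc : c ≠ 0) {f F : ℝ → G}
    (hf : LocallyIntegrableOn f (Ici 0)) (hF : ∀ s, 0 ≤ s → F s = ∫ u in (0 : ℝ)..s, f u)
    {x : E} (hx : x ≠ 0) (t : ℝ) :
    (t / (4 * π)) •
        ∫ γ : sphere (0 : E) 1, f (‖x - (c * |t|) • (γ : E)‖ ^ 2) ∂(volume : Measure E).toSphere =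
      (Real.sign t / (4 * c * ‖x‖)) •
        (F ((‖x‖ + c * |t|) ^ 2) - F ((‖x‖ - c * |t|) ^ 2)) := by
  rcases eq_or_ne t 0 with rfl | ht
  · simp
  have hint {s : ℝ} (hs : 0 ≤ s) : IntervalIntegrable f volume 0 s := by
    rw [intervalIntegrable_iff_integrableOn_Icc_of_le hs]
    exact hf.integrableOn_compact_subset Icc_subset_Ici_self isCompact_Icc
  have hlow := hint (sq_nonneg (‖x‖ - c * |t|))
  have hhigh := hint (sq_nonneg (‖x‖ + c * |t|))
  rw [integral_toSphere_comp_norm_sub_smul_sq hE hx (by positivity) (hlow.symm.trans hhigh),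
    hF _ (sq_nonneg _), hF _ (sq_nonneg _),
    intervalIntegral.integral_interval_sub_left hhigh hlow, smul_smul, ← div_abs_eq_sign]
  congr 1
  field_simp

end InnerProductSpace

/-- explicit evaluation of the spherical mean of a radially symmetric function:
`(t/(4π)) ∫_{S²} f(|x − c|t|γ|²) dσ(γ) = (sgn t/(4c|x|)) (F((|x|+c|t|)²) − F((|x|−c|t|)²))`. -/
theorem stmt_10 (c : ℝ) (hc : 0 < c) (f : ℝ → ℝ) (hf : ContinuousOn f (Set.Ici 0))
    (F : ℝ → ℝ) (hF : ∀ s, F s = ∫ u in (0:ℝ)..s, f u)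
    (x : EuclideanSpace ℝ (Fin 3)) (hx : x ≠ 0) (t : ℝ) :
    (t / (4 * π)) *
        ∫ γ : Metric.sphere (0 : EuclideanSpace ℝ (Fin 3)) 1,
          f (‖x - (c * |t|) • (γ : EuclideanSpace ℝ (Fin 3))‖ ^ 2) ∂sphMeas
      = (Real.sign t / (4 * c * ‖x‖)) *
          (F ((‖x‖ + c * |t|) ^ 2) - F ((‖x‖ - c * |t|) ^ 2)) := by
  exact stmt_10_general (by simp) hc.ne' (hf.locallyIntegrableOn measurableSet_Ici)
    (fun s _ ↦ hF s) hx t
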